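/- Under the MS-LS model with α_i + α_j = α for all pairs i, j, the second factorial moment of the nodal strength of a node within state k satisfies G̃_k″(1) = E[Y_t(Y_t − 1) | s_t = k] = e^{2α}(N−1)(8σ_k²β + 1)^{−d/2} + (N−1)(N−2) e^{2α} (2σ_k²β + 1)^{−d/2} (6σ_k²β + 1)^{−d/2}, where G̃_k is the conditional probability generating function of the nodal strength given s_t = k. -/

import Mathlib

open MeasureTheory ProbabilityTheory Real

noncomputable section

/-- Density of the centered isotropic Gaussian `N(0, σ² I_d)` on `ℝ^d`. -/
def gaussPdf (d : ℕ) (σ2 : ℝ) (x : EuclideanSpace ℝ (Fin d)) : ℝ :=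
  (2 * Real.pi * σ2) ^ (-(d : ℝ) / 2) * Real.exp (-‖x‖ ^ 2 / (2 * σ2))

/-- The centered isotropic Gaussian measure `N(0, σ² I_d)` on `ℝ^d`. -/
def gaussMeasure (d : ℕ) (σ2 : ℝ) : Measure (EuclideanSpace ℝ (Fin d)) :=
  volume.withDensity fun x => ENNReal.ofReal (gaussPdf d σ2 x)

/-- Unordered pairs of distinct nodes, represented as ordered pairs `(i, j)` with `i < j`. -/
abbrev Pairs (N : ℕ) : Type := {p : Fin N × Fin N // p.1 < p.2}

/-- Joint law of the latent positions `(Z_i)_{i}` (i.i.d. `N(0, σ² I_d)`) and of the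
edge weights `(Y_{ij})_{i<j}`, which given the latent positions are conditionally independent
Poisson variables with intensity `exp (α_i + α_j - β ‖Z_i - Z_j‖²)`. -/
def jointLaw (d N : ℕ) (β : ℝ) (α : Fin N → ℝ) (σ2 : ℝ) :
    Measure ((Fin N → EuclideanSpace ℝ (Fin d)) × (Pairs N → ℕ)) :=
  (volume.withDensity fun z : Fin N → EuclideanSpace ℝ (Fin d) =>
      ENNReal.ofReal (∏ i, gaussPdf d σ2 (z i))).bind fun z =>
    (Measure.pi fun p : Pairs N =>
        poissonMeasure
          (Real.exp (α p.1.1 + α p.1.2 - β * ‖z p.1.1 - z p.1.2‖ ^ 2)).toNNReal).map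
      fun y => (z, y)

/-- The Markov-switching latent space (MS-LS) network model: a hidden `K`-state Markov chain
`s`, state-dependent i.i.d. Gaussian latent positions `Z`, and symmetric edge weights `Y`
that conditionally on the current state (and given the latent positions) are independent
Poisson variables with log-intensity `α i + α j - β ‖Z i k - Z j k‖²`. -/
structure MSLS (Ω : Type) [MeasurableSpace Ω] where
  /-- the underlying probability measure -/
  P : Measure Ω
  isProb : IsProbabilityMeasure P
  /-- the dimension of the latent space -/
  d : ℕ
  /-- the number of nodes -/
  N : ℕ
  /-- the number of states of the hidden Markov chain -/
  K : ℕ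
  β : ℝ
  β_pos : 0 < β
  /-- individual effects -/
  α : Fin N → ℝ
  /-- state-specific variances of the latent positions -/
  σ2 : Fin K → ℝ
  σ2_pos : ∀ k, 0 < σ2 k
  /-- transition probabilities of the hidden Markov chain -/
  q : Fin K → Fin K → ℝ
  q_nonneg : ∀ l k, 0 ≤ q l k
  q_sum : ∀ l, ∑ k, q l k = 1
  /-- the hidden Markov chain -/
  s : ℕ → Ω → Fin K
  s_meas : ∀ t, Measurable (s t)
  /-- the latent positions in each state -/
  Z : Fin N → Fin K → Ω → EuclideanSpace ℝ (Fin d)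
  Z_meas : ∀ i k, Measurable (Z i k)
  /-- the edge weights -/
  Y : Fin N → Fin N → ℕ → Ω → ℕ
  Y_meas : ∀ i j t, Measurable (Y i j t)
  Y_symm : ∀ i j t ω, Y i j t ω = Y j i t ω
  state_pos : ∀ t k, P {ω | s t ω = k} ≠ 0
  /-- Markov transition probabilities -/
  trans_prob : ∀ t l k, ((P[|{ω | s t ω = l}]) {ω | s (t + 1) ω = k}).toReal = q l k
  /-- conditionally on the current state, the latent positions and the edge weights follow
  the Poisson latent space law -/
  cond_law_state : ∀ t k,
    (P[|{ω | s t ω = k}]).map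
        (fun ω => ((fun i => Z i k ω), fun p : Pairs N => Y p.1.1 p.1.2 t ω)) =
      jointLaw d N β α (σ2 k)
  /-- conditionally on the previous and current state, the latent positions and the edge
  weights follow the Poisson latent space law of the current state -/
  cond_law_pair : ∀ t l k, q l k ≠ 0 →
    (P[|{ω | s t ω = l} ∩ {ω | s (t + 1) ω = k}]).map
        (fun ω => ((fun i => Z i k ω), fun p : Pairs N => Y p.1.1 p.1.2 (t + 1) ω)) =
      jointLaw d N β α (σ2 k)

attribute [instance] MSLS.isProb

/-- The nodal strength `Y_{it} = Σ_{j ≠ i} Y_{ijt}` of node `i` at time `t`. -/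
def MSLS.strength {Ω : Type} [MeasurableSpace Ω] (M : MSLS Ω) (i : Fin M.N) (t : ℕ)
    (ω : Ω) : ℕ :=
  ∑ j ∈ Finset.univ.erase i, M.Y i j t ω

end

lemma gaussPdf_nonneg (d : ℕ) {σ2 : ℝ} (hσ : 0 < σ2) (x : EuclideanSpace ℝ (Fin d)) :
    0 ≤ gaussPdf d σ2 x := by
  unfold gaussPdf
  positivity

lemma continuous_gaussPdf (d : ℕ) (σ2 : ℝ) : Continuous (gaussPdf d σ2) := by
  unfold gaussPdf
  fun_prop

/-- Completing the square in the product of a Gaussian density and a Gaussian kernel. -/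
lemma gaussPdf_mul_exp (d : ℕ) {σ2 c : ℝ} (hσ : 0 < σ2) (hc : 0 ≤ c)
    (z x : EuclideanSpace ℝ (Fin d)) :
    gaussPdf d σ2 x * Real.exp (-c * ‖z - x‖ ^ 2) =
      (2 * Real.pi * σ2) ^ (-(d : ℝ) / 2) *
        Real.exp (-(c / (2 * c * σ2 + 1)) * ‖z‖ ^ 2) *
        Real.exp (-((2 * c * σ2 + 1) / (2 * σ2)) *
          ‖x - (2 * σ2 * c / (2 * c * σ2 + 1)) • z‖ ^ 2) := by
  have h : 2 * c * σ2 + 1 ≠ 0 := by positivity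
  unfold gaussPdf
  rw [mul_assoc ((2 * Real.pi * σ2) ^ (-(d : ℝ) / 2)),
    mul_assoc ((2 * Real.pi * σ2) ^ (-(d : ℝ) / 2)), ← Real.exp_add, ← Real.exp_add]
  congr 2
  rw [norm_sub_sq_real, norm_sub_sq_real, inner_smul_right, norm_smul, real_inner_comm, mul_pow,
    Real.norm_eq_abs, sq_abs]
  field_simp
  ring

lemma integrable_gaussPdf_mul_exp (d : ℕ) {σ2 c : ℝ} (hσ : 0 < σ2) (hc : 0 ≤ c)
    (z : EuclideanSpace ℝ (Fin d)) :
    Integrable fun x => gaussPdf d σ2 x * Real.exp (-c * ‖z - x‖ ^ 2) := by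
  simp_rw [gaussPdf_mul_exp d hσ hc z]
  refine Integrable.const_mul ?_ _
  refine Integrable.comp_sub_right
    (f := fun x => Real.exp (-((2 * c * σ2 + 1) / (2 * σ2)) * ‖x‖ ^ 2)) ?_ _
  have hB : 0 < (2 * c * σ2 + 1) / (2 * σ2) := by positivity
  refine Integrable.of_integral_ne_zero ?_
  rw [GaussianFourier.integral_rexp_neg_mul_sq_norm hB]
  positivity

lemma integral_gaussPdf_mul_exp (d : ℕ) {σ2 c : ℝ} (hσ : 0 < σ2) (hc : 0 ≤ c)
    (z : EuclideanSpace ℝ (Fin d)) :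
    ∫ x, gaussPdf d σ2 x * Real.exp (-c * ‖z - x‖ ^ 2) =
      (2 * c * σ2 + 1) ^ (-(d : ℝ) / 2) * Real.exp (-(c / (2 * c * σ2 + 1)) * ‖z‖ ^ 2) := by
  have hB : 0 < (2 * c * σ2 + 1) / (2 * σ2) := by positivity
  have hD : 0 < 2 * c * σ2 + 1 := by positivity
  simp_rw [gaussPdf_mul_exp d hσ hc z]
  rw [integral_const_mul,
    integral_sub_right_eq_self
      (fun x => Real.exp (-((2 * c * σ2 + 1) / (2 * σ2)) * ‖x‖ ^ 2)),
    GaussianFourier.integral_rexp_neg_mul_sq_norm hB, finrank_euclideanSpace_fin]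
  have h : Real.pi / ((2 * c * σ2 + 1) / (2 * σ2)) = 2 * Real.pi * σ2 / (2 * c * σ2 + 1) := by
    field_simp
  have hp : (2 * Real.pi * σ2) ^ ((d : ℝ) / 2) ≠ 0 := by positivity
  rw [h, Real.div_rpow (by positivity) hD.le, neg_div, Real.rpow_neg (by positivity),
    Real.rpow_neg hD.le]
  field_simp

lemma integral_gaussMeasure (d : ℕ) {σ2 : ℝ} (hσ : 0 < σ2)
    (f : EuclideanSpace ℝ (Fin d) → ℝ) :
    ∫ x, f x ∂(gaussMeasure d σ2) = ∫ x, gaussPdf d σ2 x * f x := by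
  rw [gaussMeasure, integral_withDensity_eq_integral_toReal_smul
    (continuous_gaussPdf d σ2).measurable.ennreal_ofReal (by simp)]
  simp [ENNReal.toReal_ofReal (gaussPdf_nonneg d hσ _)]

lemma integral_exp_gaussMeasure (d : ℕ) {σ2 c : ℝ} (hσ : 0 < σ2) (hc : 0 ≤ c)
    (z : EuclideanSpace ℝ (Fin d)) :
    ∫ x, Real.exp (-c * ‖z - x‖ ^ 2) ∂(gaussMeasure d σ2) =
      (2 * c * σ2 + 1) ^ (-(d : ℝ) / 2) * Real.exp (-(c / (2 * c * σ2 + 1)) * ‖z‖ ^ 2) := by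
  rw [integral_gaussMeasure d hσ, integral_gaussPdf_mul_exp d hσ hc]

lemma integral_exp_norm_sq_gaussMeasure (d : ℕ) {σ2 c : ℝ} (hσ : 0 < σ2) (hc : 0 ≤ c) :
    ∫ x, Real.exp (-c * ‖x‖ ^ 2) ∂(gaussMeasure d σ2) =
      (2 * c * σ2 + 1) ^ (-(d : ℝ) / 2) := by
  simpa using integral_exp_gaussMeasure d hσ hc 0

lemma integrable_gaussPdf (d : ℕ) {σ2 : ℝ} (hσ : 0 < σ2) : Integrable (gaussPdf d σ2) := by
  simpa using integrable_gaussPdf_mul_exp d hσ le_rfl 0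

lemma isProbabilityMeasure_gaussMeasure (d : ℕ) {σ2 : ℝ} (hσ : 0 < σ2) :
    IsProbabilityMeasure (gaussMeasure d σ2) := by
  refine ⟨?_⟩
  have h := integral_gaussPdf_mul_exp d hσ le_rfl 0
  simp only [neg_zero, zero_mul, zero_div, Real.exp_zero, mul_one, mul_zero, zero_add,
    Real.one_rpow] at h
  rw [gaussMeasure, withDensity_apply _ MeasurableSet.univ, Measure.restrict_univ,
    ← ofReal_integral_eq_lintegral_ofReal (integrable_gaussPdf d hσ)
      (Filter.Eventually.of_forall (gaussPdf_nonneg d hσ)), h, ENNReal.ofReal_one]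

/-- The measure with density a product of Gaussian densities is the product measure. -/
lemma withDensity_prod_gaussPdf (d N : ℕ) {σ2 : ℝ} (hσ : 0 < σ2) :
    (volume.withDensity fun z : Fin N → EuclideanSpace ℝ (Fin d) =>
      ENNReal.ofReal (∏ i, gaussPdf d σ2 (z i))) =
      Measure.pi fun _ => gaussMeasure d σ2 := by
  have := isProbabilityMeasure_gaussMeasure d hσ
  refine (Measure.pi_eq fun s hs => ?_).symm
  rw [withDensity_apply _ (MeasurableSet.univ_pi hs), volume_pi, Measure.restrict_pi_pi,
    ← ofReal_integral_eq_lintegral_ofReal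
      (Integrable.fintype_prod fun i => (integrable_gaussPdf d hσ).restrict)
      (Filter.Eventually.of_forall fun z =>
        Finset.prod_nonneg fun i _ => gaussPdf_nonneg d hσ _),
    integral_fintype_prod_eq_prod (fun _ => gaussPdf d σ2),
    ENNReal.ofReal_prod_of_nonneg fun i _ => integral_nonneg (gaussPdf_nonneg d hσ)]
  refine Finset.prod_congr rfl fun i _ => ?_
  rw [gaussMeasure, withDensity_apply _ (hs i),
    ofReal_integral_eq_lintegral_ofReal (integrable_gaussPdf d hσ).restrict
      (Filter.Eventually.of_forall (gaussPdf_nonneg d hσ))]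

/-- The joint law of two distinct coordinates of a product probability measure. -/
lemma map_pi_pair {E : Type*} [MeasurableSpace E] {N : ℕ} (μ : Measure E)
    [IsProbabilityMeasure μ] {i j : Fin N} (hij : i ≠ j) :
    (Measure.pi fun _ : Fin N => μ).map (fun z => (z i, z j)) = μ.prod μ := by
  have hind : iIndepFun (fun (i : Fin N) (z : Fin N → E) => z i) (Measure.pi fun _ => μ) :=
    iIndepFun_pi (X := fun _ => id) fun _ => aemeasurable_id
  have h := (indepFun_iff_map_prod_eq_prod_map_map (measurable_pi_apply i).aemeasurable
    (measurable_pi_apply j).aemeasurable).1 (hind.indepFun hij)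
  rw [h, (measurePreserving_eval (fun _ : Fin N => μ) i).map_eq,
    (measurePreserving_eval (fun _ : Fin N => μ) j).map_eq]

/-- The joint law of three distinct coordinates of a product probability measure. -/
lemma map_pi_triple {E : Type*} [MeasurableSpace E] {N : ℕ} (μ : Measure E)
    [IsProbabilityMeasure μ] {i j l : Fin N} (hij : i ≠ j) (hil : i ≠ l) (hjl : j ≠ l) :
    (Measure.pi fun _ : Fin N => μ).map (fun z => ((z i, z j), z l)) = (μ.prod μ).prod μ := by
  have hind : iIndepFun (fun (i : Fin N) (z : Fin N → E) => z i) (Measure.pi fun _ => μ) :=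
    iIndepFun_pi (X := fun _ => id) fun _ => aemeasurable_id
  have h := (indepFun_iff_map_prod_eq_prod_map_map (by fun_prop)
    (measurable_pi_apply l).aemeasurable).1 (hind.indepFun_prodMk measurable_pi_apply i j l hil hjl)
  rw [h, map_pi_pair μ hij, (measurePreserving_eval (fun _ : Fin N => μ) l).map_eq]

lemma integrable_exp_neg {X : Type*} [MeasurableSpace X] {μ : Measure X} [IsFiniteMeasure μ]
    {f : X → ℝ} (hf : Measurable f) (h0 : ∀ x, f x ≤ 0) :
    Integrable (fun x => Real.exp (f x)) μ := by
  refine Integrable.of_bound hf.exp.aestronglyMeasurable 1 (Filter.Eventually.of_forall fun x => ?_)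
  rw [Real.norm_eq_abs, Real.abs_exp]
  exact Real.exp_le_one_iff.2 (h0 x)

/-- The Gaussian average of the squared interaction kernel of a pair of nodes. -/
lemma integral_pi_gauss_pair (d N : ℕ) {σ2 β : ℝ} (hσ : 0 < σ2) (hβ : 0 < β) {i j : Fin N}
    (hij : i ≠ j) :
    ∫ z, Real.exp (-β * ‖z i - z j‖ ^ 2) * Real.exp (-β * ‖z i - z j‖ ^ 2)
        ∂(Measure.pi fun _ : Fin N => gaussMeasure d σ2) =
      (8 * σ2 * β + 1) ^ (-(d : ℝ) / 2) := by
  have := isProbabilityMeasure_gaussMeasure d hσ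
  have hβ2 : 0 ≤ 2 * β := by positivity
  have hD : 0 < 2 * (2 * β) * σ2 + 1 := by positivity
  simp_rw [← Real.exp_add, ← two_mul, ← mul_assoc, mul_neg]
  rw [← integral_map (φ := fun z : Fin N → EuclideanSpace ℝ (Fin d) => (z i, z j))
    (f := fun p => Real.exp (-(2 * β) * ‖p.1 - p.2‖ ^ 2)) (by fun_prop) (by fun_prop),
    map_pi_pair _ hij, integral_prod _ (integrable_exp_neg (by fun_prop) fun p => by
      have := mul_nonneg hβ2 (sq_nonneg ‖p.1 - p.2‖)
      linarith)]
  simp_rw [integral_exp_gaussMeasure d hσ hβ2]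
  rw [integral_const_mul, integral_exp_norm_sq_gaussMeasure d hσ (by positivity),
    ← Real.mul_rpow (by positivity) (by positivity)]
  congr 1
  field_simp
  ring

/-- The Gaussian average of the product of the interaction kernels of two pairs of nodes that
share exactly one node. -/
lemma integral_pi_gauss_triple (d N : ℕ) {σ2 β : ℝ} (hσ : 0 < σ2) (hβ : 0 < β)
    {i j l : Fin N} (hij : i ≠ j) (hil : i ≠ l) (hjl : j ≠ l) :
    ∫ z, Real.exp (-β * ‖z i - z j‖ ^ 2) * Real.exp (-β * ‖z i - z l‖ ^ 2)
        ∂(Measure.pi fun _ : Fin N => gaussMeasure d σ2) =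
      (2 * σ2 * β + 1) ^ (-(d : ℝ) / 2) * (6 * σ2 * β + 1) ^ (-(d : ℝ) / 2) := by
  have := isProbabilityMeasure_gaussMeasure d hσ
  have hD : 0 < 2 * β * σ2 + 1 := by positivity
  have hneg : ∀ r : ℝ, -β * r ^ 2 ≤ 0 := fun r => by
    have := mul_nonneg hβ.le (sq_nonneg r)
    linarith
  rw [← integral_map (φ := fun z : Fin N → EuclideanSpace ℝ (Fin d) => ((z i, z j), z l))
    (f := fun p => Real.exp (-β * ‖p.1.1 - p.1.2‖ ^ 2) * Real.exp (-β * ‖p.1.1 - p.2‖ ^ 2))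
    (by fun_prop) (by fun_prop), map_pi_triple _ hij hil hjl, integral_prod]
  swap
  · simp_rw [← Real.exp_add]
    exact integrable_exp_neg (by fun_prop) fun p => add_nonpos (hneg _) (hneg _)
  simp_rw [integral_const_mul, integral_exp_gaussMeasure d hσ hβ.le]
  rw [integral_prod]
  swap
  · simp_rw [mul_left_comm _ ((2 * β * σ2 + 1) ^ (-(d : ℝ) / 2)), ← Real.exp_add]
    refine (integrable_exp_neg (by fun_prop) fun p => add_nonpos (hneg _) ?_).const_mul _
    have : 0 ≤ β / (2 * β * σ2 + 1) * ‖p.1‖ ^ 2 := by positivity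
    linarith
  simp_rw [integral_mul_const, integral_exp_gaussMeasure d hσ hβ.le]
  have h : ∀ x : EuclideanSpace ℝ (Fin d),
      (2 * β * σ2 + 1) ^ (-(d : ℝ) / 2) * Real.exp (-(β / (2 * β * σ2 + 1)) * ‖x‖ ^ 2) *
        ((2 * β * σ2 + 1) ^ (-(d : ℝ) / 2) * Real.exp (-(β / (2 * β * σ2 + 1)) * ‖x‖ ^ 2)) =
      (2 * β * σ2 + 1) ^ (-(d : ℝ) / 2) * (2 * β * σ2 + 1) ^ (-(d : ℝ) / 2) *
        Real.exp (-(2 * (β / (2 * β * σ2 + 1))) * ‖x‖ ^ 2) := fun x => by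
    rw [mul_mul_mul_comm, ← Real.exp_add]
    ring_nf
  simp_rw [h]
  rw [integral_const_mul, integral_exp_norm_sq_gaussMeasure d hσ (by positivity), mul_assoc,
    ← Real.mul_rpow hD.le (by positivity)]
  congr 2
  · ring
  · field_simp
    ring

lemma hasSum_poisson_descFactorial_two (r : ℝ) :
    HasSum (fun n : ℕ => Real.exp (-r) * r ^ n / (n.factorial : ℝ) * (n.descFactorial 2 : ℝ))
      (r ^ 2) := by
  rw [← hasSum_nat_add_iff' 2]
  have h := (NormedSpace.expSeries_div_hasSum_exp r).mul_left (Real.exp (-r) * r ^ 2)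
  rw [← Real.exp_eq_exp_ℝ, mul_right_comm, ← Real.exp_add] at h
  simp only [neg_add_cancel, Real.exp_zero, one_mul] at h
  convert! h using 1
  · ext n
    have hn : ((n + 2).factorial : ℝ) = n.factorial * ((n + 2).descFactorial 2 : ℝ) := by
      have := Nat.factorial_mul_descFactorial (Nat.le_add_left 2 n)
      rw [Nat.add_sub_cancel] at this
      exact_mod_cast this.symm
    have h0 : ((n + 2).descFactorial 2 : ℝ) ≠ 0 := by
      exact_mod_cast fun h => absurd (Nat.descFactorial_eq_zero_iff_lt.1 h) (by lia)
    rw [hn]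
    field_simp
    ring
  · simp [Finset.sum_range_succ]

/-- The second factorial moment of a Poisson variable. -/
lemma lintegral_descFactorial_two_poissonMeasure (r : NNReal) :
    ∫⁻ n, ENNReal.ofReal (n.descFactorial 2 : ℝ) ∂(poissonMeasure r) =
      ENNReal.ofReal ((r : ℝ) ^ 2) := by
  have h := hasSum_poisson_descFactorial_two r
  rw [← ofReal_integral_eq_lintegral_ofReal
    (integrable_poissonMeasure_iff.2 (by simpa using h.summable))
    (Filter.Eventually.of_forall fun n => by positivity), integral_poissonMeasure]
  simp_rw [smul_eq_mul]
  rw [h.tsum_eq]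

/-- A finite sum of independent Poisson variables is Poisson. -/
lemma hasLaw_sum_poissonMeasure {Ω ι : Type*} [MeasurableSpace Ω] {P : Measure Ω}
    [IsProbabilityMeasure P] {X : ι → Ω → ℕ} {r : ι → NNReal} (hX : iIndepFun X P)
    (hm : ∀ i, Measurable (X i)) (hlaw : ∀ i, HasLaw (X i) (poissonMeasure (r i)) P)
    (S : Finset ι) : HasLaw (∑ i ∈ S, X i) (poissonMeasure (∑ i ∈ S, r i)) P := by
  classical
  induction S using Finset.induction_on with
  | empty =>
    refine ⟨aemeasurable_const, ?_⟩
    rw [Finset.sum_empty, Finset.sum_empty]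
    refine (Measure.map_const P 0).trans (Measure.ext_of_singleton fun n => ?_)
    rw [poissonMeasure_singleton]
    rcases Nat.eq_zero_or_pos n with rfl | hn
    · simp
    · simp [hn.ne', hn.ne]
  | insert i S hi ih =>
    rw [Finset.sum_insert hi, Finset.sum_insert hi, add_comm, add_comm (r i)]
    exact (hX.indepFun_finsetSum_of_notMem hm hi).hasLaw_add_poissonMeasure ih (hlaw i)

/-- The second factorial moment of a sum of distinct coordinates under a product of Poisson
measures. -/
lemma lintegral_descFactorial_two_sum_pi {ι κ : Type*} [Fintype ι] [Fintype κ] (r : ι → NNReal)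
    {g : κ → ι} (hg : Function.Injective g) :
    ∫⁻ y, ENNReal.ofReal ((∑ j, y (g j)).descFactorial 2 : ℝ)
        ∂(Measure.pi fun p => poissonMeasure (r p)) =
      ENNReal.ofReal ((∑ j, (r (g j) : ℝ)) ^ 2) := by
  have hind : iIndepFun (fun (p : ι) (y : ι → ℕ) => y p)
      (Measure.pi fun p => poissonMeasure (r p)) :=
    iIndepFun_pi (X := fun _ => id) fun _ => aemeasurable_id
  have h := hasLaw_sum_poissonMeasure (r := fun j => r (g j)) (hind.precomp hg)
    (fun j => measurable_pi_apply (g j))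
    (fun j => (measurePreserving_eval (fun p => poissonMeasure (r p)) (g j)).hasLaw) Finset.univ
  have h2 := lintegral_descFactorial_two_poissonMeasure (∑ j, r (g j))
  rw [← h.map_eq, lintegral_map' (Measurable.of_discrete).aemeasurable h.aemeasurable] at h2
  simpa using h2

lemma measurable_poissonMeasure : Measurable poissonMeasure := by
  refine Measure.measurable_of_measurable_coe _ fun s _ => ?_
  simp only [poissonMeasure, Measure.sum_apply_of_countable, Measure.smul_apply, smul_eq_mul]
  fun_prop

/-- A product of probability measures depends measurably on a parameter if all factors do. -/
lemma measurable_measure_pi {X ι : Type*} [MeasurableSpace X] [Fintype ι] {E : ι → Type*}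
    [∀ i, MeasurableSpace (E i)] {μ : X → (i : ι) → Measure (E i)}
    [∀ x i, IsProbabilityMeasure (μ x i)] (h : ∀ i, Measurable fun x => μ x i) :
    Measurable fun x => Measure.pi (μ x) := by
  refine Measurable.measure_of_isPiSystem_of_isProbabilityMeasure generateFrom_pi.symm
    isPiSystem_pi ?_
  rintro _ ⟨s, hs, rfl⟩
  simp_rw [Measure.pi_pi]
  exact Finset.measurable_prod _ fun i _ =>
    (Measure.measurable_coe (hs i (Set.mem_univ i))).comp (h i)

/-- The law of a parameter paired with a random value is measurable in the parameter. -/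
lemma measurable_map_prodMk {X Y : Type*} [MeasurableSpace X] [MeasurableSpace Y]
    {μ : X → Measure Y} [∀ x, IsProbabilityMeasure (μ x)] (h : Measurable μ) :
    Measurable fun x => (μ x).map fun y => (x, y) := by
  have (x : X) : IsProbabilityMeasure ((μ x).map fun y => (x, y)) :=
    Measure.isProbabilityMeasure_map (by fun_prop)
  refine Measurable.measure_of_isPiSystem_of_isProbabilityMeasure generateFrom_prod.symm
    isPiSystem_prod ?_
  rintro _ ⟨s, hs, t, ht, rfl⟩
  classical
  have h2 : (fun x => (μ x).map (fun y => (x, y)) (s ×ˢ t)) = s.indicator fun x => μ x t := by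
    ext x
    rw [Measure.map_apply (by fun_prop) (hs.prod ht), Set.mk_preimage_prod_right_eq_if]
    by_cases hx : x ∈ s <;> simp [hx]
  rw [h2]
  exact ((Measure.measurable_coe ht).comp h).indicator hs

/-- Integration against the joint law of latent positions and edge weights. -/
lemma lintegral_jointLaw (d N : ℕ) (β : ℝ) (α : Fin N → ℝ) {σ2 : ℝ} (hσ : 0 < σ2)
    {f : (Pairs N → ℕ) → ENNReal} (hf : Measurable f) :
    ∫⁻ p, f p.2 ∂(jointLaw d N β α σ2) =
      ∫⁻ z, ∫⁻ y, f y ∂(Measure.pi fun p : Pairs N => poissonMeasure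
          (Real.exp (α p.1.1 + α p.1.2 - β * ‖z p.1.1 - z p.1.2‖ ^ 2)).toNNReal)
        ∂(Measure.pi fun _ : Fin N => gaussMeasure d σ2) := by
  have hm : Measurable fun z : Fin N → EuclideanSpace ℝ (Fin d) =>
      (Measure.pi fun p : Pairs N => poissonMeasure
        (Real.exp (α p.1.1 + α p.1.2 - β * ‖z p.1.1 - z p.1.2‖ ^ 2)).toNNReal).map
          fun y => (z, y) :=
    measurable_map_prodMk <| measurable_measure_pi fun p =>
      measurable_poissonMeasure.comp (by fun_prop)
  rw [jointLaw, withDensity_prod_gaussPdf d N hσ,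
    Measure.lintegral_bind hm.aemeasurable (by fun_prop)]
  refine lintegral_congr fun z => ?_
  rw [lintegral_map (by fun_prop) (by fun_prop)]

/-- The unordered pair of two distinct nodes. -/
def unorderedPair {N : ℕ} (i j : Fin N) (h : j ≠ i) : Pairs N :=
  if hij : i < j then ⟨(i, j), hij⟩ else ⟨(j, i), lt_of_le_of_ne (not_lt.1 hij) h⟩

lemma unorderedPair_injective {N : ℕ} (i : Fin N) :
    Function.Injective fun j : {j : Fin N // j ≠ i} => unorderedPair i j.1 j.2 := by
  rintro ⟨j, hj⟩ ⟨l, hl⟩ h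
  simp only [unorderedPair] at h
  split_ifs at h <;> simp_all [Subtype.ext_iff, Prod.ext_iff]

/-- A symmetric function of two nodes can be read off from their unordered pair. -/
lemma apply_unorderedPair {N : ℕ} {γ : Type*} {F : Fin N → Fin N → γ}
    (hF : ∀ i j, F i j = F j i) (i j : Fin N) (h : j ≠ i) :
    F (unorderedPair i j h).1.1 (unorderedPair i j h).1.2 = F i j := by
  unfold unorderedPair
  split_ifs
  · rfl
  · exact hF j i

/-- The strength of a node is a sum over the unordered pairs that contain it. -/
lemma MSLS.strength_eq_sum {Ω : Type} [MeasurableSpace Ω] (M : MSLS Ω) (i : Fin M.N) (t : ℕ)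
    (ω : Ω) :
    M.strength i t ω = ∑ j : {j : Fin M.N // j ≠ i},
      M.Y (unorderedPair i j.1 j.2).1.1 (unorderedPair i j.1 j.2).1.2 t ω := by
  rw [MSLS.strength, Finset.sum_subtype (p := fun j => j ≠ i) _ (by simp)]
  exact Finset.sum_congr rfl fun j _ =>
    (apply_unorderedPair (F := fun i j => M.Y i j t ω) (fun i j => M.Y_symm i j t ω) i j.1 j.2).symm

/-- The Gaussian average of the squared total interaction of a node. -/
lemma integral_sq_sum_exp (d N : ℕ) {σ2 β : ℝ} (hσ : 0 < σ2) (hβ : 0 < β) (a : ℝ) (i : Fin N) :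
    ∫ z, (∑ j : {j : Fin N // j ≠ i}, Real.exp (a - β * ‖z i - z j.1‖ ^ 2)) ^ 2
        ∂(Measure.pi fun _ : Fin N => gaussMeasure d σ2) =
      Real.exp (2 * a) * ((N : ℝ) - 1) * (8 * σ2 * β + 1) ^ (-(d : ℝ) / 2) +
        ((N : ℝ) - 1) * ((N : ℝ) - 2) * Real.exp (2 * a) *
          (2 * σ2 * β + 1) ^ (-(d : ℝ) / 2) * (6 * σ2 * β + 1) ^ (-(d : ℝ) / 2) := by
  have := isProbabilityMeasure_gaussMeasure d hσ
  have hneg : ∀ r : ℝ, -β * r ^ 2 ≤ 0 := fun r => by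
    have := mul_nonneg hβ.le (sq_nonneg r)
    linarith
  have hexp : ∀ r s : ℝ, Real.exp (a - β * r) * Real.exp (a - β * s) =
      Real.exp (2 * a) * (Real.exp (-β * r) * Real.exp (-β * s)) := fun r s => by
    simp_rw [← Real.exp_add]
    ring_nf
  have hint : ∀ j l : {j : Fin N // j ≠ i},
      Integrable (fun z : Fin N → EuclideanSpace ℝ (Fin d) => Real.exp (2 * a) *
        (Real.exp (-β * ‖z i - z j.1‖ ^ 2) * Real.exp (-β * ‖z i - z l.1‖ ^ 2)))
        (Measure.pi fun _ : Fin N => gaussMeasure d σ2) := fun j l => by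
    simp_rw [← Real.exp_add (-β * _)]
    exact (integrable_exp_neg (by fun_prop) fun z => add_nonpos (hneg _) (hneg _)).const_mul _
  have hcard : (Fintype.card {j : Fin N // j ≠ i} : ℝ) = N - 1 := by
    rw [Fintype.card_subtype_compl, Fintype.card_fin, Fintype.card_subtype_eq,
      Nat.cast_pred (Fin.pos i)]
  set A := (8 * σ2 * β + 1) ^ (-(d : ℝ) / 2) with hA
  set B := (2 * σ2 * β + 1) ^ (-(d : ℝ) / 2) * (6 * σ2 * β + 1) ^ (-(d : ℝ) / 2) with hB
  have hval : ∀ j l : {j : Fin N // j ≠ i},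
      ∫ z, (Real.exp (-β * ‖z i - z j.1‖ ^ 2) * Real.exp (-β * ‖z i - z l.1‖ ^ 2))
        ∂(Measure.pi fun _ : Fin N => gaussMeasure d σ2) = B + if j = l then A - B else 0 := by
    intro j l
    by_cases hjl : j = l
    · subst hjl
      rw [integral_pi_gauss_pair d N hσ hβ j.2.symm, if_pos rfl]
      ring
    · rw [integral_pi_gauss_triple d N hσ hβ j.2.symm l.2.symm fun h => hjl (Subtype.ext h),
        if_neg hjl, add_zero]
  simp_rw [pow_two (Finset.sum _ _), Finset.sum_mul_sum, hexp]
  rw [integral_finsetSum _ fun j _ => integrable_finsetSum _ fun l _ => hint j l]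
  simp_rw [integral_finsetSum _ fun l _ => hint _ l, integral_const_mul, hval, mul_add,
    Finset.sum_add_distrib, mul_ite, mul_zero, Finset.sum_ite_eq, Finset.mem_univ, if_true,
    Finset.sum_const, Finset.card_univ, nsmul_eq_mul, hcard]
  rw [hB]
  ring

/-- Under the MS-LS model with `α_i + α_j = α` for all pairs, the second
factorial moment of the nodal strength within state `k`
(i.e. `G̃_k''(1) = E[Y_t (Y_t - 1) | s_t = k]`) equals
`e^{2α}(N-1)(8σ_k²β + 1)^{-d/2} + (N-1)(N-2) e^{2α} (2σ_k²β + 1)^{-d/2} (6σ_k²β + 1)^{-d/2}`. -/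
theorem statement11 {Ω : Type} [MeasurableSpace Ω] (M : MSLS Ω) (a : ℝ)
    (hα : ∀ i j, M.α i + M.α j = a) (i : Fin M.N) (t : ℕ) (k : Fin M.K) :
    ∫ ω, (Nat.descFactorial (M.strength i t ω) 2 : ℝ) ∂(M.P[|{ω | M.s t ω = k}]) =
      Real.exp (2 * a) * ((M.N : ℝ) - 1) * (8 * M.σ2 k * M.β + 1) ^ (-(M.d : ℝ) / 2) +
        ((M.N : ℝ) - 1) * ((M.N : ℝ) - 2) * Real.exp (2 * a) *
          (2 * M.σ2 k * M.β + 1) ^ (-(M.d : ℝ) / 2) *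
          (6 * M.σ2 k * M.β + 1) ^ (-(M.d : ℝ) / 2) := by
  have hσ := M.σ2_pos k
  have hZY : Measurable fun ω =>
      ((fun i => M.Z i k ω), fun p : Pairs M.N => M.Y p.1.1 p.1.2 t ω) :=
    (measurable_pi_lambda _ fun i => M.Z_meas i k).prodMk
      (measurable_pi_lambda _ fun p => M.Y_meas _ _ t)
  have hstr : Measurable fun ω => (Nat.descFactorial (M.strength i t ω) 2 : ℝ) := by
    refine (Measurable.of_discrete (f := fun n : ℕ => (n.descFactorial 2 : ℝ))).comp ?_
    exact Finset.measurable_sum _ fun j _ => M.Y_meas i j t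
  have hlaw := lintegral_jointLaw M.d M.N M.β M.α hσ
    (f := fun y => ENNReal.ofReal ((∑ j : {j : Fin M.N // j ≠ i},
      y (unorderedPair i j.1 j.2)).descFactorial 2 : ℝ)) Measurable.of_discrete
  rw [← M.cond_law_state t k, lintegral_map (by fun_prop) hZY] at hlaw
  simp_rw [lintegral_descFactorial_two_sum_pi _ (unorderedPair_injective i), hα,
    Real.coe_toNNReal _ (Real.exp_pos _).le] at hlaw
  rw [integral_eq_lintegral_of_nonneg_ae (Filter.Eventually.of_forall fun ω => by positivity)
    hstr.aestronglyMeasurable]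
  simp_rw [M.strength_eq_sum, hlaw]
  rw [← integral_eq_lintegral_of_nonneg_ae
    (Filter.Eventually.of_forall fun z => by positivity) (by fun_prop),
    ← integral_sq_sum_exp M.d M.N hσ M.β_pos a i]
  refine integral_congr_ae (Filter.Eventually.of_forall fun z => ?_)
  dsimp only
  congr 1
  exact Finset.sum_congr rfl fun j _ =>
    apply_unorderedPair (F := fun i j => Real.exp (a - M.β * ‖z i - z j‖ ^ 2))
      (fun i j => by rw [norm_sub_rev]) i j.1 j.2
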